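/- arXiv:1410.3027 — 7 statements merged into one kernel-verified Lean document; each statement's English description precedes it below -/
import Mathlib

section
/- Let D be a countable linear order with a least element ⊥ and a greatest element ⊤ with ⊥ ≠ ⊤, let d_1 < d_2 < … < d_n be elements of D with ⊥ < d_1 and d_n < ⊤, and let r_1 < r_2 < … < r_n be real numbers with 0 < r_1 and r_n < 1. Then there exists a strictly monotone map g : D → [0,1] such that g(⊥) = 0, g(⊤) = 1, g(d_i) = r_i for each 1 ≤ i ≤ n, and g preserves all existing suprema and infima: for every subset S ⊆ D and every s ∈ D, if s is the least upper bound of S in D then g(s) is the least upper bound of g(S) in [0,1], and if s is the greatest lower bound of S in D then g(s) is the greatest lower bound of g(S) in [0,1]. -/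
open Set unitInterval

open Order Order.PartialIso in
theorem iso_extending_aux {α β : Type*} [LinearOrder α] [LinearOrder β]
    [Countable α] [DenselyOrdered α] [NoMinOrder α] [NoMaxOrder α]
    [Nonempty α] [Countable β] [DenselyOrdered β] [NoMinOrder β] [NoMaxOrder β] [Nonempty β]
    (p : PartialIso α β) :
    ∃ e : α ≃o β, ∀ x ∈ p.val, e x.1 = x.2 := by
  cases nonempty_encodable α
  cases nonempty_encodable β
  let to_cofinal : α ⊕ β → Cofinal (PartialIso α β) := fun p ↦
    Sum.recOn p (definedAtLeft β) (definedAtRight α)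
  let our_ideal : Ideal (PartialIso α β) := idealOfCofinals p to_cofinal
  let F a := funOfIdeal a our_ideal (cofinal_meets_idealOfCofinals _ to_cofinal (Sum.inl a))
  let G b := invOfIdeal b our_ideal (cofinal_meets_idealOfCofinals _ to_cofinal (Sum.inr b))
  refine ⟨OrderIso.ofCmpEqCmp (fun a ↦ (F a).val) (fun b ↦ (G b).val) fun a b ↦ by
      rcases (F a).prop with ⟨f, hf, ha⟩
      rcases (G b).prop with ⟨g, hg, hb⟩
      rcases our_ideal.directed _ hf _ hg with ⟨m, _, fm, gm⟩
      exact m.prop (a, _) (fm ha) (_, b) (gm hb), ?_⟩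
  rintro ⟨a, b⟩ hx
  change (F a).val = b
  rcases (F a).prop with ⟨f, hf, ha⟩
  rcases our_ideal.directed _ hf _ (mem_idealOfCofinals p to_cofinal) with ⟨m, _, fm, gm⟩
  have := m.prop (a, _) (fm ha) (a, b) (gm hx)
  simp only [cmp_self_eq_eq] at this
  exact (cmp_eq_eq_iff _ _).1 this.symm

/-- The order `D` with copies of rational intervals inserted into gaps and at the ends. -/
abbrev DenseFill (D : Type*) [LinearOrder D] : Type _ :=
  {x : D ×ₗ ℚ // (0 < (ofLex x).2 → (∃ b, (ofLex x).1 ⋖ b) ∨ IsMax (ofLex x).1) ∧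
    ((ofLex x).2 < 0 → IsMin (ofLex x).1)}

namespace DenseFill
variable {D : Type*} [LinearOrder D]

def inc (d : D) : DenseFill D := ⟨toLex (d, 0), by simp⟩

theorem lt_def (x y : DenseFill D) : x < y ↔ (ofLex x.1).1 < (ofLex y.1).1 ∨
    (ofLex x.1).1 = (ofLex y.1).1 ∧ (ofLex x.1).2 < (ofLex y.1).2 := by
  rw [← Subtype.coe_lt_coe, Prod.Lex.lt_iff]

instance [Countable D] : Countable (DenseFill D) := by
  have : Countable (D ×ₗ ℚ) := inferInstanceAs (Countable (D × ℚ))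
  infer_instance

instance [Nonempty D] : Nonempty (DenseFill D) := ⟨inc (Classical.arbitrary D)⟩

instance : DenselyOrdered (DenseFill D) := by
  constructor
  rintro ⟨⟨d, q⟩, h1, h2⟩ ⟨⟨d', q'⟩, h1', h2'⟩ h
  rw [lt_def] at h
  change (0 < q → (∃ b, d ⋖ b) ∨ IsMax d) at h1
  change (q < 0 → IsMin d) at h2
  change (0 < q' → (∃ b, d' ⋖ b) ∨ IsMax d') at h1'
  change (q' < 0 → IsMin d') at h2'
  change d < d' ∨ d = d' ∧ q < q' at h
  rcases h with h | ⟨rfl, h⟩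
  · by_cases hc : ∃ b, d ⋖ b
    · refine ⟨⟨toLex (d, |q| + 1), fun _ => Or.inl hc, fun hh => ?_⟩, ?_, ?_⟩
      · change |q| + 1 < 0 at hh
        linarith [abs_nonneg q]
      · rw [lt_def]; right; exact ⟨rfl, by change q < |q| + 1; linarith [le_abs_self q]⟩
      · rw [lt_def]; left; exact h
    · obtain ⟨e, he, he'⟩ : ∃ e, d < e ∧ e < d' := by
        by_contra! hn
        exact hc ⟨d', h, fun c hc hc' => absurd hc' (not_lt.2 (hn c hc))⟩
      exact ⟨inc e, (lt_def _ _).2 (Or.inl he), (lt_def _ _).2 (Or.inl he')⟩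
  · refine ⟨⟨toLex (d, (q + q') / 2), fun hh => h1' ?_, fun hh => h2 ?_⟩, ?_, ?_⟩
    · change 0 < (q + q') / 2 at hh
      linarith
    · change (q + q') / 2 < 0 at hh
      linarith
    · rw [lt_def]; right; exact ⟨rfl, by change q < (q + q') / 2; linarith⟩
    · rw [lt_def]; right; exact ⟨rfl, by change (q + q') / 2 < q'; linarith⟩

instance : NoMaxOrder (DenseFill D) := by
  constructor
  rintro ⟨⟨d, q⟩, h1, h2⟩
  by_cases hm : IsMax d
  · refine ⟨⟨toLex (d, |q| + 1), fun _ => Or.inr hm, fun hh => ?_⟩, ?_⟩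
    · change |q| + 1 < 0 at hh
      linarith [abs_nonneg q]
    · rw [lt_def]; right; exact ⟨rfl, by change q < |q| + 1; linarith [le_abs_self q]⟩
  · obtain ⟨e, he⟩ := not_isMax_iff.1 hm
    exact ⟨inc e, (lt_def _ _).2 (Or.inl he)⟩

instance : NoMinOrder (DenseFill D) := by
  constructor
  rintro ⟨⟨d, q⟩, h1, h2⟩
  by_cases hm : IsMin d
  · refine ⟨⟨toLex (d, -|q| - 1), fun hh => ?_, fun _ => hm⟩, ?_⟩
    · change 0 < -|q| - 1 at hh
      linarith [abs_nonneg q]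
    · rw [lt_def]; right; exact ⟨rfl, by change -|q| - 1 < q; linarith [neg_abs_le q]⟩
  · obtain ⟨e, he⟩ := not_isMin_iff.1 hm
    exact ⟨inc e, (lt_def _ _).2 (Or.inl he)⟩

theorem inc_lt {a b : D} : inc a < inc b ↔ a < b := by
  rw [lt_def]; simp [inc]

theorem exists_lub {S : Set D} {s : D} (hS : S.Nonempty) (h : IsLUB S s) (a : DenseFill D)
    (ha : a < inc s) : ∃ d ∈ S, a < inc d := by
  obtain ⟨⟨e, q⟩, h1, h2⟩ := a
  rw [lt_def] at ha
  change (q < 0 → IsMin e) at h2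
  change e < s ∨ e = s ∧ q < 0 at ha
  rcases ha with ha | ⟨rfl, ha⟩
  · obtain ⟨d, hd, hl⟩ := (lt_isLUB_iff h).1 ha
    exact ⟨d, hd, (lt_def _ _).2 (Or.inl hl)⟩
  · obtain ⟨d, hd⟩ := hS
    have : d = e := le_antisymm (h.1 hd) (h2 ha (h.1 hd))
    subst this
    exact ⟨d, hd, (lt_def _ _).2 (Or.inr ⟨rfl, ha⟩)⟩

theorem exists_glb {S : Set D} {s : D} (hS : S.Nonempty) (h : IsGLB S s) (a : DenseFill D)
    (ha : inc s < a) : ∃ d ∈ S, inc d < a := by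
  obtain ⟨⟨e, q⟩, h1, h2⟩ := a
  rw [lt_def] at ha
  change (0 < q → (∃ b, e ⋖ b) ∨ IsMax e) at h1
  change s < e ∨ s = e ∧ 0 < q at ha
  rcases ha with ha | ⟨rfl, ha⟩
  · obtain ⟨d, hd, hl⟩ := (isGLB_lt_iff h).1 ha
    exact ⟨d, hd, (lt_def _ _).2 (Or.inl hl)⟩
  · suffices hs : s ∈ S from ⟨s, hs, (lt_def _ _).2 (Or.inr ⟨rfl, ha⟩)⟩
    rcases h1 ha with ⟨b, hb⟩ | hm
    · obtain ⟨d, hd, hl⟩ := (isGLB_lt_iff h).1 hb.1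
      have : d = s := le_antisymm (hb.le_of_lt hl) (h.1 hd)
      exact this ▸ hd
    · obtain ⟨d, hd⟩ := hS
      have : d = s := le_antisymm (hm (h.1 hd)) (h.1 hd)
      exact this ▸ hd

end DenseFill

theorem exists_real_embed {D ι : Type*} [LinearOrder D] [Countable D] [Nonempty D] [Finite ι]
    (u : ι → D) (v : ι → ℝ) (huv : ∀ i j, u i < u j ↔ v i < v j) :
    ∃ g : D → ℝ, StrictMono g ∧ (∀ i, g (u i) = v i) ∧
      (∀ (S : Set D) (s : D), S.Nonempty → IsLUB S s → IsLUB (g '' S) (g s)) ∧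
      (∀ (S : Set D) (s : D), S.Nonempty → IsGLB S s → IsGLB (g '' S) (g s)) := by
  classical
  have := Fintype.ofFinite ι
  let T : Set ℝ := range ((↑) : ℚ → ℝ) ∪ range v
  have hT : ∀ q : ℚ, (q : ℝ) ∈ T := fun q => Or.inl ⟨q, rfl⟩
  have : Countable T := ((countable_range _).union (countable_range _)).to_subtype
  have : Nonempty T := ⟨⟨_, hT 0⟩⟩
  have : DenselyOrdered T := ⟨fun a b h => by
    obtain ⟨q, h1, h2⟩ := exists_rat_btwn (show (a : ℝ) < b from h)
    exact ⟨⟨q, hT q⟩, h1, h2⟩⟩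
  have : NoMaxOrder T := ⟨fun a => by
    obtain ⟨q, h1⟩ := exists_rat_gt (a : ℝ)
    exact ⟨⟨q, hT q⟩, h1⟩⟩
  have : NoMinOrder T := ⟨fun a => by
    obtain ⟨q, h1⟩ := exists_rat_lt (a : ℝ)
    exact ⟨⟨q, hT q⟩, h1⟩⟩
  let w : ι → T := fun i => ⟨v i, Or.inr ⟨i, rfl⟩⟩
  have hw : ∀ i j, DenseFill.inc (u i) < DenseFill.inc (u j) ↔ w i < w j := fun i j =>
    DenseFill.inc_lt.trans (huv i j)
  let p : Order.PartialIso (DenseFill D) T :=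
    ⟨Finset.univ.image fun i => (DenseFill.inc (u i), w i), by
      intro x hx y hy
      simp only [Finset.mem_image, Finset.mem_univ, true_and] at hx hy
      obtain ⟨i, rfl⟩ := hx
      obtain ⟨j, rfl⟩ := hy
      have h1 := hw i j
      have h2 := hw j i
      simp only [cmp, cmpUsing, h1, h2]⟩
  obtain ⟨e, he⟩ := iso_extending_aux p
  have hmono : StrictMono fun d : D => ((e (DenseFill.inc d) : T) : ℝ) := fun a b h =>
    e.strictMono (DenseFill.inc_lt.2 h)
  refine ⟨fun d => (e (DenseFill.inc d) : T), hmono, ?_, ?_, ?_⟩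
  · intro i
    have := he (DenseFill.inc (u i), w i) (Finset.mem_image_of_mem _ (Finset.mem_univ i))
    exact congrArg Subtype.val this
  · intro S s hS h
    refine ⟨hmono.monotone.mem_upperBounds_image h.1, fun y hy => ?_⟩
    by_contra! hlt
    obtain ⟨q, h1, h2⟩ := exists_rat_btwn hlt
    obtain ⟨a, ha⟩ := e.surjective ⟨q, hT q⟩
    have h3 : a < DenseFill.inc s := by
      rw [← e.lt_iff_lt, ha]; exact h2
    obtain ⟨d, hd, hl⟩ := DenseFill.exists_lub hS h a h3
    have h4 : (q : ℝ) < e (DenseFill.inc d) := by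
      have := e.lt_iff_lt.2 hl
      rw [ha] at this; exact this
    have h5 := hy (mem_image_of_mem _ hd)
    exact absurd (h1.trans h4) (not_lt.2 h5)
  · intro S s hS h
    refine ⟨hmono.monotone.mem_lowerBounds_image h.1, fun y hy => ?_⟩
    by_contra! hlt
    obtain ⟨q, h1, h2⟩ := exists_rat_btwn hlt
    obtain ⟨a, ha⟩ := e.surjective ⟨q, hT q⟩
    have h3 : DenseFill.inc s < a := by
      rw [← e.lt_iff_lt, ha]; exact h1
    obtain ⟨d, hd, hl⟩ := DenseFill.exists_glb hS h a h3
    have h4 : e (DenseFill.inc d) < (q : ℝ) := by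
      have := e.lt_iff_lt.2 hl
      rw [ha] at this; exact this
    have h5 := hy (mem_image_of_mem _ hd)
    exact absurd (h4.trans h2) (not_lt.2 h5)

/-- Embedding of a countable linear order with endpoints (and finitely many
prescribed intermediate values) into `[0,1]`, preserving all existing suprema
and infima. -/
theorem embed_countable_order_finite {D : Type*} [LinearOrder D] [Countable D]
    [OrderBot D] [OrderTop D] (hD : (⊥ : D) ≠ ⊤)
    {n : ℕ} (d : Fin n → D) (r : Fin n → ℝ)
    (hd : StrictMono d) (hdb : ∀ i, ⊥ < d i) (hdt : ∀ i, d i < ⊤)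
    (hr : StrictMono r) (hr0 : ∀ i, 0 < r i) (hr1 : ∀ i, r i < 1) :
    ∃ g : D → unitInterval, StrictMono g ∧ g ⊥ = 0 ∧ g ⊤ = 1 ∧
      (∀ i, (g (d i) : ℝ) = r i) ∧
      (∀ (S : Set D) (s : D), IsLUB S s → IsLUB (g '' S) (g s)) ∧
      (∀ (S : Set D) (s : D), IsGLB S s → IsGLB (g '' S) (g s)) := by
  have hbt : (⊥ : D) < ⊤ := bot_lt_iff_ne_bot.2 hD.symm
  let u : Option (Option (Fin n)) → D := fun o => o.elim ⊥ fun o => o.elim ⊤ d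
  let v : Option (Option (Fin n)) → ℝ := fun o => o.elim 0 fun o => o.elim 1 r
  obtain ⟨g, hg, hv, hl, hgl⟩ := exists_real_embed u v (by
    rintro (_ | _ | i) (_ | _ | j) <;> simp only [u, v, Option.elim]
    · simp
    · simp [hbt]
    · simp [hdb, hr0]
    · simp
    · simp
    · simp [(hr1 j).le]
    · simp [(hr0 i).le]
    · simp [hdt, hr1]
    · rw [hd.lt_iff_lt, hr.lt_iff_lt])
  have h0 : g ⊥ = 0 := hv none
  have h1 : g ⊤ = 1 := hv (some none)
  have hI : ∀ x, g x ∈ Icc (0 : ℝ) 1 := fun x =>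
    ⟨h0 ▸ hg.monotone bot_le, h1 ▸ hg.monotone le_top⟩
  have hb : (⟨g ⊥, hI ⊥⟩ : unitInterval) = 0 := Subtype.ext h0
  have ht : (⟨g ⊤, hI ⊤⟩ : unitInterval) = 1 := Subtype.ext h1
  refine ⟨fun x => ⟨g x, hI x⟩, fun a b h => hg h, hb, ht,
    fun i => hv (some (some i)), ?_, ?_⟩
  · intro S s h
    rcases S.eq_empty_or_nonempty with rfl | hS
    · have : s = ⊥ := isLUB_empty_iff.1 h |>.eq_bot
      subst this
      rw [image_empty]; beta_reduce; rw [hb]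
      exact isLUB_empty
    · have := hl S s hS h
      refine ⟨?_, fun y hy => this.2 ?_⟩
      · rintro _ ⟨x, hx, rfl⟩
        exact this.1 (mem_image_of_mem _ hx)
      · rintro _ ⟨x, hx, rfl⟩
        exact hy (mem_image_of_mem _ hx)
  · intro S s h
    rcases S.eq_empty_or_nonempty with rfl | hS
    · have : s = ⊤ := isGLB_empty_iff.1 h |>.eq_top
      subst this
      rw [image_empty]; beta_reduce; rw [ht]
      exact isGLB_empty
    · have := hgl S s hS h
      refine ⟨?_, fun y hy => this.2 ?_⟩
      · rintro _ ⟨x, hx, rfl⟩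
        exact this.1 (mem_image_of_mem _ hx)
      · rintro _ ⟨x, hx, rfl⟩
        exact hy (mem_image_of_mem _ hx)
end

section
/- Let D be a countable linear order with a least element ⊥ and a greatest element ⊤ with ⊥ ≠ ⊤, let a : ℕ → D be a strictly decreasing sequence with a(0) < ⊤ and such that ⊥ is the greatest lower bound of the set {a(n) : n ∈ ℕ} in D, and let r : ℕ → ℝ be a strictly decreasing sequence with 0 < r(n) < 1 for all n and lim_{n→∞} r(n) = 0. Then there exists a strictly monotone map g : D → [0,1] such that g(⊥) = 0, g(⊤) = 1, g(a(n)) = r(n) for every n ∈ ℕ, and g preserves all existing suprema and infima: for every subset S ⊆ D and every s ∈ D, if s is the least upper bound of S in D then g(s) is the least upper bound of g(S) in [0,1], and if s is the greatest lower bound of S in D then g(s) is the greatest lower bound of g(S) in [0,1]. -/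
open Set unitInterval Filter

lemma exists_embed_aux {D : Type*} [LinearOrder D] [Countable D]
    [OrderBot D] [OrderTop D] :
    ∃ f : D → ℝ, StrictMono f ∧
      (∀ (S : Set D) (s : D), S.Nonempty → IsLUB S s → IsLUB (f '' S) (f s)) ∧
      (∀ (S : Set D) (s : D), S.Nonempty → IsGLB S s → IsGLB (f '' S) (f s)) := by
  let P : D ×ₗ ℚ → Prop := fun p =>
    (0 < (ofLex p).2 → (ofLex p).1 = ⊤ ∨ ∃ e, (ofLex p).1 ⋖ e) ∧ ((ofLex p).2 < 0 → (ofLex p).1 = ⊥)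
  let E := {p : D ×ₗ ℚ // P p}
  have mk : ∀ (d : D) (q : ℚ), (0 < q → d = ⊤ ∨ ∃ e, d ⋖ e) → (q < 0 → d = ⊥) →
      P (toLex (d, q)) := fun d q h1 h2 => ⟨h1, h2⟩
  have lt_iff : ∀ (d : D) (q : ℚ) (d' : D) (q' : ℚ) h h',
      ((⟨toLex (d, q), h⟩ : E) < ⟨toLex (d', q'), h'⟩) ↔ d < d' ∨ d = d' ∧ q < q' := by
    intro d q d' q' h h'
    rw [← Subtype.coe_lt_coe, Prod.Lex.toLex_lt_toLex]
  have cases : ∀ p : E, ∃ d q, ∃ h : P (toLex (d, q)), p = ⟨toLex (d, q), h⟩ :=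
    fun p => ⟨(ofLex p.1).1, (ofLex p.1).2, p.2, rfl⟩
  have z : ∀ d : D, P (toLex (d, 0)) := fun d => mk d 0 (by simp) (by simp)
  haveI : Countable E := by
    have : Countable (D ×ₗ ℚ) := inferInstanceAs (Countable (D × ℚ))
    infer_instance
  haveI : Nonempty E := ⟨⟨_, z ⊥⟩⟩
  haveI : NoMinOrder E := ⟨fun p => by
    obtain ⟨d, q, h, rfl⟩ := cases p
    refine ⟨⟨toLex (⊥, min q 0 - 1), mk _ _ (fun hh => ?_) (fun _ => rfl)⟩, ?_⟩
    · have := min_le_right q 0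
      linarith
    · rw [lt_iff]
      rcases eq_or_ne ⊥ d with h | h
      · right
        refine ⟨h, ?_⟩
        have := min_le_left q 0
        linarith
      · left
        exact bot_lt_iff_ne_bot.2 h.symm⟩
  haveI : NoMaxOrder E := ⟨fun p => by
    obtain ⟨d, q, h, rfl⟩ := cases p
    refine ⟨⟨toLex (⊤, max q 0 + 1), mk _ _ (fun _ => Or.inl rfl) (fun hh => ?_)⟩, ?_⟩
    · have := le_max_right q 0
      linarith
    · rw [lt_iff]
      rcases eq_or_ne d ⊤ with h | h
      · right
        refine ⟨h, ?_⟩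
        have := le_max_left q 0
        linarith
      · left
        exact lt_top_iff_ne_top.2 h⟩
  haveI : DenselyOrdered E := ⟨fun p p' hlt => by
    obtain ⟨d, q, h, rfl⟩ := cases p
    obtain ⟨d', q', h', rfl⟩ := cases p'
    rw [lt_iff] at hlt
    rcases hlt with hlt | ⟨rfl, hlt⟩
    · by_cases hc : d ⋖ d'
      · refine ⟨⟨toLex (d, max q 0 + 1), mk _ _ (fun _ => Or.inr ⟨_, hc⟩) (fun hh => ?_)⟩, ?_, ?_⟩
        · have := le_max_right q 0
          linarith
        · rw [lt_iff]
          refine Or.inr ⟨rfl, ?_⟩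
          have := le_max_left q 0
          linarith
        · rw [lt_iff]
          exact Or.inl hlt
      · obtain ⟨e, h1, h2⟩ := exists_lt_lt_of_not_covBy hlt hc
        exact ⟨⟨_, z e⟩, (lt_iff _ _ _ _ _ _).2 (Or.inl h1), (lt_iff _ _ _ _ _ _).2 (Or.inl h2)⟩
    · refine ⟨⟨toLex (d, (q + q') / 2), mk _ _ (fun hh => h'.1 ?_) (fun hh => h.2 ?_)⟩, ?_, ?_⟩
      · change 0 < q'
        linarith
      · change q < 0
        linarith
      · rw [lt_iff]
        exact Or.inr ⟨rfl, by linarith⟩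
      · rw [lt_iff]
        exact Or.inr ⟨rfl, by linarith⟩⟩
  obtain ⟨e⟩ := Order.iso_of_countable_dense E ℚ
  let f : D → ℝ := fun d => ((e ⟨_, z d⟩ : ℚ) : ℝ)
  have hf : StrictMono f := by
    intro x y hxy
    simp only [f]
    rw [Rat.cast_lt, e.lt_iff_lt, lt_iff]
    exact Or.inl hxy
  refine ⟨f, hf, ?_, ?_⟩
  · intro S s hS hs
    refine ⟨hf.monotone.mem_upperBounds_image hs.1, fun c hc => ?_⟩
    by_contra! hlt
    by_cases hsS : s ∈ S
    · exact absurd (hc ⟨s, hsS, rfl⟩) (not_le.2 hlt)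
    obtain ⟨q, h1, h2⟩ := exists_rat_btwn hlt
    obtain ⟨p, rfl⟩ := e.surjective q
    simp only [f] at h2
    rw [Rat.cast_lt, e.lt_iff_lt] at h2
    obtain ⟨d, t, h, rfl⟩ := cases p
    rw [lt_iff] at h2
    rcases h2 with h2 | ⟨rfl, h2⟩
    · obtain ⟨x, hx, hdx⟩ := (lt_isLUB_iff hs).1 h2
      have h3 : f x ≤ c := hc ⟨x, hx, rfl⟩
      have h4 : ((e ⟨_, h⟩ : ℚ) : ℝ) < f x := by
        simp only [f]
        rw [Rat.cast_lt, e.lt_iff_lt, lt_iff]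
        exact Or.inl hdx
      linarith
    · have : d = ⊥ := h.2 h2
      subst this
      obtain ⟨x, hx⟩ := hS
      have := le_bot_iff.1 (hs.1 hx)
      exact hsS (this ▸ hx)
  · intro S s hS hs
    refine ⟨hf.monotone.mem_lowerBounds_image hs.1, fun c hc => ?_⟩
    by_contra! hlt
    by_cases hsS : s ∈ S
    · exact absurd (hc ⟨s, hsS, rfl⟩) (not_le.2 hlt)
    obtain ⟨q, h1, h2⟩ := exists_rat_btwn hlt
    obtain ⟨p, rfl⟩ := e.surjective q
    simp only [f] at h1
    rw [Rat.cast_lt, e.lt_iff_lt] at h1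
    obtain ⟨d, t, h, rfl⟩ := cases p
    rw [lt_iff] at h1
    rcases h1 with h1 | ⟨rfl, h1⟩
    · obtain ⟨x, hx, hdx⟩ := (isGLB_lt_iff hs).1 h1
      have h3 : c ≤ f x := hc ⟨x, hx, rfl⟩
      have h4 : f x < ((e ⟨_, h⟩ : ℚ) : ℝ) := by
        simp only [f]
        rw [Rat.cast_lt, e.lt_iff_lt, lt_iff]
        exact Or.inl hdx
      linarith
    · rcases h.1 h1 with h3 | ⟨u, h3⟩
      · change s = ⊤ at h3
        subst h3
        obtain ⟨x, hx⟩ := hS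
        have := top_le_iff.1 (hs.1 hx)
        exact hsS (this ▸ hx)
      · change s ⋖ u at h3
        obtain ⟨x, hx, hxu⟩ := (isGLB_lt_iff hs).1 h3.lt
        rcases (hs.1 hx).lt_or_eq with h4 | h4
        · exact h3.2 h4 hxu
        · exact hsS (h4 ▸ hx)

lemma exists_homeo_aux (B R : ℕ → ℝ) (b : ℝ) (hB : StrictAnti B) (hR : StrictAnti R)
    (hBl : Tendsto B atTop (nhds b)) (hRl : Tendsto R atTop (nhds 0)) :
    ∃ h : ℝ → ℝ, Continuous h ∧ Monotone h ∧ StrictMonoOn h (Icc b (B 0)) ∧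
      (∀ n, h (B n) = R n) ∧ h b = 0 := by
  have hBp : ∀ n, 0 < B n - B (n+1) := fun n => sub_pos.2 (hB n.lt_succ_self)
  have hRp : ∀ n, 0 < R n - R (n+1) := fun n => sub_pos.2 (hR n.lt_succ_self)
  have hbB : ∀ n, b ≤ B n := fun n => hB.antitone.le_of_tendsto hBl n
  let c : ℕ → ℝ → ℝ := fun n x => max 0 (min 1 ((x - B (n+1)) / (B n - B (n+1))))
  have c0 : ∀ n x, 0 ≤ c n x := fun n x => le_max_left _ _
  have c1 : ∀ n x, c n x ≤ 1 := fun n x => max_le zero_le_one (min_le_left _ _)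
  have cm : ∀ n, Monotone (c n) := by
    intro n x y hxy
    have := (hBp n).le
    simp only [c]
    gcongr
  have cz : ∀ n x, x ≤ B (n+1) → c n x = 0 := by
    intro n x hx
    apply max_eq_left
    exact (min_le_right _ _).trans (div_nonpos_of_nonpos_of_nonneg (by linarith) (hBp n).le)
  have co : ∀ n x, B n ≤ x → c n x = 1 := by
    intro n x hx
    have : 1 ≤ (x - B (n+1)) / (B n - B (n+1)) := by
      rw [le_div_iff₀ (hBp n)]
      linarith
    simp only [c]
    rw [min_eq_left this, max_eq_right zero_le_one]
  have cmid : ∀ n x, B (n+1) ≤ x → x ≤ B n → c n x = (x - B (n+1)) / (B n - B (n+1)) := by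
    intro n x h1 h2
    have h3 : (x - B (n+1)) / (B n - B (n+1)) ≤ 1 := by
      rw [div_le_one (hBp n)]
      linarith
    have h4 : 0 ≤ (x - B (n+1)) / (B n - B (n+1)) := div_nonneg (by linarith) (hBp n).le
    simp only [c]
    rw [min_eq_right h3, max_eq_right h4]
  have hsum : Summable (fun n => R n - R (n+1)) := by
    refine ((hasSum_iff_tendsto_nat_of_nonneg (fun n => (hRp n).le) (R 0)).2 ?_).summable
    simp only [Finset.sum_range_sub']
    simpa using hRl.const_sub (R 0)
  have hs : ∀ x, Summable (fun n => (R n - R (n+1)) * c n x) := fun x =>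
    Summable.of_nonneg_of_le (fun n => mul_nonneg (hRp n).le (c0 n x))
      (fun n => mul_le_of_le_one_right (hRp n).le (c1 n x)) hsum
  refine ⟨fun x => ∑' n, (R n - R (n+1)) * c n x, ?_, ?_, ?_, ?_, ?_⟩
  · refine continuous_tsum (fun n => ?_) hsum (fun n x => ?_)
    · simp only [c]
      fun_prop
    · rw [Real.norm_of_nonneg (mul_nonneg (hRp n).le (c0 n x))]
      exact mul_le_of_le_one_right (hRp n).le (c1 n x)
  · intro x y hxy
    exact (hs x).tsum_le_tsum (fun n => mul_le_mul_of_nonneg_left (cm n hxy) (hRp n).le) (hs y)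
  · intro x hx y hy hxy
    have hex : ∃ n, B n < y := (hBl.eventually_lt_const (lt_of_le_of_lt hx.1 hxy)).exists
    classical
    obtain ⟨n, hn1, hn2⟩ : ∃ n, B (n+1) < y ∧ y ≤ B n := by
      have h1 := Nat.find_spec hex
      have h2 : Nat.find hex ≠ 0 := by
        intro h0
        rw [h0] at h1
        exact absurd hy.2 (not_le.2 h1)
      obtain ⟨m, hm⟩ := Nat.exists_eq_succ_of_ne_zero h2
      refine ⟨m, by rw [hm] at h1; exact h1, not_lt.1 (Nat.find_min hex (by omega))⟩
    refine (hs x).tsum_lt_tsum (i := n)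
      (fun n => mul_le_mul_of_nonneg_left (cm n hxy.le) (hRp n).le) ?_ (hs y)
    refine mul_lt_mul_of_pos_left ?_ (hRp n)
    rw [cmid n y hn1.le hn2]
    rcases le_total x (B (n+1)) with h | h
    · rw [cz n x h]
      exact div_pos (by linarith) (hBp n)
    · rw [cmid n x h (hxy.le.trans hn2)]
      exact div_lt_div_of_pos_right (by linarith) (hBp n)
  · intro m
    refine ((hasSum_iff_tendsto_nat_of_nonneg
      (fun n => mul_nonneg (hRp n).le (c0 n _)) (R m)).2 ?_).tsum_eq
    have key : ∀ k, ∑ n ∈ Finset.range k, (R n - R (n+1)) * c n (B m) = R (min m k) - R k := by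
      intro k
      induction k with
      | zero => simp
      | succ k ih =>
        rw [Finset.sum_range_succ, ih]
        rcases lt_or_ge k m with h | h
        · rw [cz k _ (hB.antitone h), min_eq_right h.le, min_eq_right (Nat.succ_le_of_lt h)]
          ring
        · rw [co k _ (hB.antitone h), min_eq_left h, min_eq_left (h.trans k.le_succ)]
          ring
    have : Tendsto (fun k => R m - R k) atTop (nhds (R m)) := by
      simpa using hRl.const_sub (R m)
    refine this.congr' ?_
    filter_upwards [eventually_ge_atTop m] with k hk
    rw [key, min_eq_left hk]
  · have : ∀ n, (R n - R (n+1)) * c n b = 0 := fun n => by rw [cz n b (hbB _), mul_zero]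
    simp [this]

/-- Embedding of a countable linear order with endpoints, carrying a strictly
decreasing sequence with infimum `⊥` to a prescribed strictly decreasing
sequence of reals tending to `0`, into `[0,1]`, preserving all existing
suprema and infima. -/
theorem embed_countable_order_seq {D : Type*} [LinearOrder D] [Countable D]
    [OrderBot D] [OrderTop D] (hD : (⊥ : D) ≠ ⊤)
    (a : ℕ → D) (r : ℕ → ℝ)
    (ha : StrictAnti a) (ha0 : a 0 < ⊤) (haglb : IsGLB (Set.range a) (⊥ : D))
    (hr : StrictAnti r) (hr0 : ∀ n, 0 < r n) (hr1 : ∀ n, r n < 1)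
    (hrlim : Tendsto r atTop (nhds 0)) :
    ∃ g : D → unitInterval, StrictMono g ∧ g ⊥ = 0 ∧ g ⊤ = 1 ∧
      (∀ n, (g (a n) : ℝ) = r n) ∧
      (∀ (S : Set D) (s : D), IsLUB S s → IsLUB (g '' S) (g s)) ∧
      (∀ (S : Set D) (s : D), IsGLB S s → IsGLB (g '' S) (g s)) := by
  obtain ⟨f, hf, hsup, hinf⟩ := exists_embed_aux (D := D)
  let B : ℕ → ℝ := fun n => Nat.casesOn n (f ⊤) (fun k => f (a k))
  let R : ℕ → ℝ := fun n => Nat.casesOn n 1 r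
  have hB : StrictAnti B := by
    refine strictAnti_nat_of_succ_lt ?_
    rintro (_ | n)
    · exact hf ha0
    · exact hf (ha n.lt_succ_self)
  have hR : StrictAnti R := by
    refine strictAnti_nat_of_succ_lt ?_
    rintro (_ | n)
    · exact hr1 0
    · exact hr n.lt_succ_self
  have hBl : Tendsto B atTop (nhds (f ⊥)) := by
    rw [← tendsto_add_atTop_iff_nat 1]
    have h1 := hinf _ _ (range_nonempty a) haglb
    rw [← range_comp] at h1
    exact tendsto_atTop_isGLB (hf.monotone.comp_antitone ha.antitone) h1
  have hRl : Tendsto R atTop (nhds 0) := by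
    rw [← tendsto_add_atTop_iff_nat 1]
    exact hrlim
  obtain ⟨h, hc, hm, hsm, hBR, hb⟩ := exists_homeo_aux B R (f ⊥) hB hR hBl hRl
  have hmem : ∀ d, f d ∈ Icc (f ⊥) (B 0) := fun d =>
    ⟨hf.monotone bot_le, hf.monotone (le_top : d ≤ ⊤)⟩
  have h1 : h (f ⊤) = 1 := hBR 0
  have hI : ∀ d, h (f d) ∈ unitInterval := fun d =>
    ⟨hb ▸ hm (hmem d).1, h1 ▸ hm (hmem d).2⟩
  let g : D → unitInterval := fun d => ⟨h (f d), hI d⟩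
  have hg : StrictMono g := fun x y hxy => hsm (hmem x) (hmem y) (hf hxy)
  have hg0 : g ⊥ = 0 := Subtype.ext hb
  have hg1 : g ⊤ = 1 := Subtype.ext h1
  refine ⟨g, hg, hg0, hg1, fun n => hBR (n+1), ?_, ?_⟩
  · intro S s hs
    refine ⟨hg.monotone.mem_upperBounds_image hs.1, fun c hcu => ?_⟩
    rcases S.eq_empty_or_nonempty with rfl | hS
    · have : s = ⊥ := by simpa using hs
      rw [this, hg0]
      exact c.2.1
    · have h2 := hsup S s hS hs
      by_contra! hlt
      have h3 : ∀ᶠ y in nhds (f s), (c : ℝ) < h y :=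
        hc.continuousAt.eventually (lt_mem_nhds hlt)
      obtain ⟨y, hy, hyS⟩ := ((h2.frequently_mem (hS.image f)).and_eventually
        (h3.filter_mono inf_le_left)).exists
      obtain ⟨x, hx, rfl⟩ := hy
      exact absurd (hcu ⟨x, hx, rfl⟩) (not_le.2 hyS)
  · intro S s hs
    refine ⟨hg.monotone.mem_lowerBounds_image hs.1, fun c hcu => ?_⟩
    rcases S.eq_empty_or_nonempty with rfl | hS
    · have : s = ⊤ := by simpa using hs
      rw [this, hg1]
      exact c.2.2
    · have h2 := hinf S s hS hs
      by_contra! hlt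
      have h3 : ∀ᶠ y in nhds (f s), h y < (c : ℝ) :=
        hc.continuousAt.eventually (gt_mem_nhds hlt)
      obtain ⟨y, hy, hyS⟩ := ((h2.frequently_mem (hS.image f)).and_eventually
        (h3.filter_mono inf_le_left)).exists
      obtain ⟨x, hx, rfl⟩ := hy
      exact absurd (hcu ⟨x, hx, rfl⟩) (not_le.2 hyS)
end

section
/- The Gödel implication is 1-Lipschitz with respect to d_max: for all x₁, y₁, x₂, y₂ ∈ [0,1], d_max(x₁ ⊸ y₁, x₂ ⊸ y₂) ≤ max(d_max(x₁, x₂), d_max(y₁, y₂)). -/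
open Set

/-- `d_max(x,y) = 0` if `x = y`, and `max x y` otherwise. -/
noncomputable def dmax (x y : ℝ) : ℝ := if x = y then 0 else max x y

/-- Gödel implication in the reversed semantics: `x ⊸ y = 0` if `x ≥ y`, else `y`. -/
noncomputable def gimp (x y : ℝ) : ℝ := if y ≤ x then 0 else y

/-- The Gödel implication is 1-Lipschitz with respect to `d_max`. -/
theorem gimp_lipschitz :
    ∀ x₁ ∈ Icc (0:ℝ) 1, ∀ y₁ ∈ Icc (0:ℝ) 1, ∀ x₂ ∈ Icc (0:ℝ) 1, ∀ y₂ ∈ Icc (0:ℝ) 1,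
      dmax (gimp x₁ y₁) (gimp x₂ y₂) ≤ max (dmax x₁ x₂) (dmax y₁ y₂) := by
  rintro x₁ ⟨h1, -⟩ y₁ ⟨h2, -⟩ x₂ ⟨h3, -⟩ y₂ ⟨h4, -⟩
  unfold dmax gimp
  grind
end

section
/- The lattice operations max and min on [0,1] are 1-Lipschitz with respect to d_max: for all x₁, y₁, x₂, y₂ ∈ [0,1], d_max(max(x₁,y₁), max(x₂,y₂)) ≤ max(d_max(x₁,x₂), d_max(y₁,y₂)) and d_max(min(x₁,y₁), min(x₂,y₂)) ≤ max(d_max(x₁,x₂), d_max(y₁,y₂)). -/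
open Set

/-- `max` and `min` on `[0,1]` are 1-Lipschitz with respect to `d_max`. -/
theorem max_min_lipschitz :
    ∀ x₁ ∈ Icc (0:ℝ) 1, ∀ y₁ ∈ Icc (0:ℝ) 1, ∀ x₂ ∈ Icc (0:ℝ) 1, ∀ y₂ ∈ Icc (0:ℝ) 1,
      dmax (max x₁ y₁) (max x₂ y₂) ≤ max (dmax x₁ x₂) (dmax y₁ y₂) ∧
      dmax (min x₁ y₁) (min x₂ y₂) ≤ max (dmax x₁ x₂) (dmax y₁ y₂) := by
  rintro x₁ ⟨hx₁, -⟩ y₁ ⟨hy₁, -⟩ x₂ ⟨hx₂, -⟩ y₂ ⟨hy₂, -⟩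
  unfold dmax
  constructor
  · grind
  · grind
end

section
/- Suprema and infima are 1-Lipschitz with respect to d_max: for every nonempty index set ι and all families f, g : ι → [0,1], d_max(sup_{i∈ι} f(i), sup_{i∈ι} g(i)) ≤ sup_{i∈ι} d_max(f(i), g(i)) and d_max(inf_{i∈ι} f(i), inf_{i∈ι} g(i)) ≤ sup_{i∈ι} d_max(f(i), g(i)), where all suprema and infima are taken in the complete lattice [0,1]. -/
open Set unitInterval

instance : Fact ((0:ℝ) ≤ 1) := ⟨zero_le_one⟩

/-- `d_max` on the complete lattice `[0,1]`:
`d_max(x,y) = 0` if `x = y`, and `max x y` otherwise. -/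
noncomputable def dmaxI (x y : unitInterval) : unitInterval :=
  if x = y then 0 else max x y

theorem dmaxI_aux {ι : Type*} (f g : ι → unitInterval) (i : ι) (h : f i ≠ g i) :
    f i ≤ ⨆ i, dmaxI (f i) (g i) ∧ g i ≤ ⨆ i, dmaxI (f i) (g i) := by
  have h1 : dmaxI (f i) (g i) ≤ ⨆ i, dmaxI (f i) (g i) := le_iSup (fun i => dmaxI (f i) (g i)) i
  have h2 : dmaxI (f i) (g i) = max (f i) (g i) := if_neg h
  rw [h2] at h1
  exact ⟨(le_max_left _ _).trans h1, (le_max_right _ _).trans h1⟩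

theorem dmaxI_sup_aux {ι : Type*} (f g : ι → unitInterval) (D : unitInterval)
    (hD : ∀ i, f i ≠ g i → f i ≤ D ∧ g i ≤ D) (h : (⨆ i, f i) < ⨆ i, g i) :
    (⨆ i, g i) ≤ D := by
  have h1 : (⨆ i, g i) ≤ max (⨆ i, f i) D := by
    refine iSup_le fun i => ?_
    by_cases e : f i = g i
    · rw [← e]
      exact (le_iSup f i).trans (le_max_left _ _)
    · exact (hD i e).2.trans (le_max_right _ _)
  rcases le_max_iff.1 h1 with h2 | h2
  · exact absurd h (not_lt.2 h2)
  · exact h2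

theorem dmaxI_inf_aux {ι : Type*} (f g : ι → unitInterval) (D : unitInterval)
    (hD : ∀ i, f i ≠ g i → f i ≤ D ∧ g i ≤ D) (h : (⨅ i, f i) < ⨅ i, g i) :
    (⨅ i, g i) ≤ D := by
  by_contra hc
  refine absurd h (not_lt.2 (le_iInf fun i => ?_))
  by_cases e : f i = g i
  · rw [e]
    exact iInf_le g i
  · exact absurd ((iInf_le g i).trans (hD i e).2) hc

/-- Suprema and infima over a nonempty index set are 1-Lipschitz with respect
to `d_max`, all suprema and infima being taken in the complete lattice `[0,1]`. -/
theorem iSup_iInf_lipschitz {ι : Type*} [Nonempty ι] (f g : ι → unitInterval) :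
    dmaxI (⨆ i, f i) (⨆ i, g i) ≤ ⨆ i, dmaxI (f i) (g i) ∧
    dmaxI (⨅ i, f i) (⨅ i, g i) ≤ ⨆ i, dmaxI (f i) (g i) := by
  have hD := dmaxI_aux f g
  have hD' : ∀ i, g i ≠ f i → g i ≤ ⨆ i, dmaxI (f i) (g i) ∧ f i ≤ ⨆ i, dmaxI (f i) (g i) :=
    fun i h => (hD i h.symm).symm
  constructor
  · rcases lt_trichotomy (⨆ i, f i) (⨆ i, g i) with h | h | h
    · rw [dmaxI, if_neg h.ne, max_eq_right h.le]
      exact dmaxI_sup_aux f g _ hD h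
    · rw [dmaxI, if_pos h]
      exact unitInterval.nonneg'
    · rw [dmaxI, if_neg h.ne', max_eq_left h.le]
      exact dmaxI_sup_aux g f _ hD' h
  · rcases lt_trichotomy (⨅ i, f i) (⨅ i, g i) with h | h | h
    · rw [dmaxI, if_neg h.ne, max_eq_right h.le]
      exact dmaxI_inf_aux f g _ hD h
    · rw [dmaxI, if_pos h]
      exact unitInterval.nonneg'
    · rw [dmaxI, if_neg h.ne', max_eq_left h.le]
      exact dmaxI_inf_aux g f _ hD' h
end

section
/- Let V ⊆ [0,1] be closed in the standard topology of ℝ with 0 ∈ V and 1 ∈ V, and suppose every accumulation point of V (in ℝ) lies in {0}. Then V equipped with the metric d_max is a compact metric space. -/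
open Set Filter

theorem compact_of_finite_far {X : Type*} [MetricSpace X] (x0 : X)
    (h : ∀ ε > 0, {y : X | ε ≤ dist y x0}.Finite) : CompactSpace X := by
  refine ⟨isCompact_iff_ultrafilter_le_nhds.2 fun f _ => ?_⟩
  by_cases hf : (f : Filter X) ≤ nhds x0
  · exact ⟨x0, mem_univ _, hf⟩
  · rw [Metric.nhds_basis_ball.ge_iff] at hf
    push Not at hf
    obtain ⟨ε, hε, hb⟩ := hf
    have hc : (Metric.ball x0 ε)ᶜ ∈ f := Ultrafilter.compl_mem_iff_notMem.2 hb
    have e : (Metric.ball x0 ε)ᶜ = {y : X | ε ≤ dist y x0} := by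
      ext y; simp
    rw [e] at hc
    obtain ⟨x, _, hx⟩ := isCompact_iff_ultrafilter_le_nhds.1 (h ε hε).isCompact f
      (le_principal_iff.2 hc)
    exact ⟨x, mem_univ _, hx⟩

/-- A Gödel set all of whose accumulation points lie in `{0}` is, with the
metric `d_max`, a compact metric space. -/
theorem goedel_set_dmax_compact (V : Set ℝ) (hV : V ⊆ Icc 0 1)
    (hcl : IsClosed V) (h0 : (0:ℝ) ∈ V) (h1 : (1:ℝ) ∈ V)
    (hacc : ∀ x : ℝ, AccPt x (𝓟 V) → x = 0) :
    ∃ m : MetricSpace V,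
      (∀ a b : V, m.dist a b = dmax (a : ℝ) (b : ℝ)) ∧
      @CompactSpace V m.toUniformSpace.toTopologicalSpace := by
  let m : MetricSpace V :=
    { dist := fun a b => dmax (a : ℝ) (b : ℝ)
      dist_self := fun a => by simp [dmax]
      dist_comm := fun a b => by simp only [dmax, eq_comm, max_comm]
      dist_triangle := fun a b c => by
        have ha := (hV a.2).1
        have hb := (hV b.2).1
        have hc := (hV c.2).1
        show dmax _ _ ≤ dmax _ _ + dmax _ _
        unfold dmax
        grind
      eq_of_dist_eq_zero := fun {a b} h => by
        have ha := (hV a.2).1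
        have hb := (hV b.2).1
        change dmax _ _ = 0 at h
        apply Subtype.ext
        unfold dmax at h
        grind }
  refine ⟨m, fun a b => rfl, ?_⟩
  refine @compact_of_finite_far V m ⟨0, h0⟩ fun ε hε => ?_
  have hfin : (V ∩ Ici ε).Finite := by
    by_contra hinf
    obtain ⟨x, _, hx⟩ := Set.Infinite.exists_accPt_of_subset_isCompact hinf
      (isCompact_Icc (a := (0:ℝ)) (b := 1)) (inter_subset_left.trans hV)
    have hx0 := hacc x (hx.mono (principal_mono.2 inter_subset_left))
    have hc : x ∈ closure (Ici ε) :=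
      mem_closure_iff_clusterPt.2 (hx.mono (principal_mono.2 inter_subset_right)).clusterPt
    rw [isClosed_Ici.closure_eq, mem_Ici] at hc
    linarith
  refine (hfin.preimage (f := ((↑) : V → ℝ)) Subtype.val_injective.injOn).subset ?_
  intro y hy
  refine ⟨y.2, ?_⟩
  have hy0 := (hV y.2).1
  change ε ≤ dmax (y : ℝ) 0 at hy
  unfold dmax at hy
  rw [mem_Ici]
  grind
end

section
/- Ultrafilter limits with respect to d_max commute with the Gödel implication: let V ⊆ [0,1] be closed with 0, 1 ∈ V, closed under the operation ⊸, and with all accumulation points of V contained in {0}; let 𝒟 be an ultrafilter on an index set I, let x, y : I → V be families, and let a, b ∈ V be the 𝒟-limits of (x_i) and (y_i) respectively in the metric space (V, d_max). Then a ⊸ b is the 𝒟-limit of the family (x_i ⊸ y_i) in (V, d_max). -/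
open Set Filter

/-- `v` is the `𝒟`-limit of the family `x` with respect to the metric `d_max`. -/
def DLim {I : Type*} (𝒟 : Ultrafilter I) (x : I → ℝ) (v : ℝ) : Prop :=
  ∀ ε : ℝ, 0 < ε → {i | dmax (x i) v < ε} ∈ 𝒟

/-- Ultrafilter limits with respect to `d_max` commute with the Gödel
implication on a Gödel set `V` whose accumulation points lie in `{0}` and
which is closed under `⊸`. -/
theorem dlim_gimp {I : Type*} (V : Set ℝ) (hV : V ⊆ Icc 0 1)
    (hcl : IsClosed V) (h0 : (0:ℝ) ∈ V) (h1 : (1:ℝ) ∈ V)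
    (hop : ∀ a ∈ V, ∀ b ∈ V, gimp a b ∈ V)
    (hacc : ∀ x : ℝ, AccPt x (𝓟 V) → x = 0)
    (𝒟 : Ultrafilter I) (x y : I → ℝ)
    (hx : ∀ i, x i ∈ V) (hy : ∀ i, y i ∈ V)
    (a b : ℝ) (ha : a ∈ V) (hb : b ∈ V)
    (hxa : DLim 𝒟 x a) (hyb : DLim 𝒟 y b) :
    DLim 𝒟 (fun i => gimp (x i) (y i)) (gimp a b) := by
  intro ε hε
  have ha0 := (hV ha).1
  have hb0 := (hV hb).1
  have key : ∃ δ : ℝ, 0 < δ ∧ δ ≤ ε ∧ (0 < a → δ ≤ a) ∧ (0 < b → δ ≤ b) := by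
    refine ⟨min ε (min (if 0 < a then a else 1) (if 0 < b then b else 1)), ?_, min_le_left _ _, ?_, ?_⟩
    · refine lt_min hε (lt_min ?_ ?_) <;> split_ifs <;> first | assumption | norm_num
    · intro h
      simp [h]
    · intro h
      simp [h]
  obtain ⟨δ, hδ, hδε, hδa, hδb⟩ := key
  filter_upwards [hxa δ hδ, hyb δ hδ] with i h1 h2
  have hxi := (hV (hx i)).1
  have hyi := (hV (hy i)).1
  simp only [Set.mem_setOf_eq, dmax, gimp] at h1 h2 ⊢
  clear hacc hop hcl hV hx hy hxa hyb
  have e1 : x i = a ∨ (a = 0 ∧ x i < δ) := by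
    by_cases h : x i = a
    · exact Or.inl h
    · rw [if_neg h, max_lt_iff] at h1
      rcases ha0.eq_or_lt with h' | h'
      · exact Or.inr ⟨h'.symm, h1.1⟩
      · linarith [hδa h', h1.2]
  have e2 : y i = b ∨ (b = 0 ∧ y i < δ) := by
    by_cases h : y i = b
    · exact Or.inl h
    · rw [if_neg h, max_lt_iff] at h2
      rcases hb0.eq_or_lt with h' | h'
      · exact Or.inr ⟨h'.symm, h2.1⟩
      · linarith [hδb h', h2.2]
  clear h1 h2
  grind
end
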